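/- For every integer k ≥ 3 and every integer n divisible by k−1 with n ≥ 5(k−1), there exists a k-vertex-connected simple graph on n vertices with exactly kn/2 edges (note that kn is even under these assumptions). -/

import Mathlib

/-!
The graph is the box product of the complete graph `K_{k-1}` with a cycle: it is `k`-regular, and it
consists of `k - 1` copies (columns) of the cycle whose corresponding vertices form cliques
(rows). Delete at most `k - 1` vertices. If some column is untouched, every remaining vertex is
joined to it by its row. Otherwise every column loses exactly one vertex, so it stays connected
because the cycle is `2`-connected, and any two columns share an untouched row because the cycle has
at least three vertices.
-/

open SimpleGraph

theorem injOn_of_surjOn_univ_of_encard_le {α β : Type*} [Finite β] {f : α → β} {s : Set α}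
    (hf : Set.SurjOn f s Set.univ) (hs : s.encard ≤ ENat.card β) : Set.InjOn f s := by
  have himage : (f '' s).encard = ENat.card β := by
    rw [Set.univ_subset_iff.1 hf, Set.encard_univ]
  have hfin : s.Finite := Set.finite_of_encard_le_coe (hs.trans_eq (ENat.card_eq_coe_natCard β))
  exact hfin.injOn_of_encard_image_eq ((Set.encard_image_le f s).antisymm (hs.trans_eq himage.symm))

section VertexConnected

variable {V W : Type*} {G : SimpleGraph V} {H : SimpleGraph W} {k : ℕ}

/-- `k`-vertex-connectivity: there are more than `k` vertices, and deleting fewer than `k` of them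
leaves a connected graph. Cardinalities are taken in `ℕ∞`, so that `V` may be infinite. -/
def IsVertexConnected (k : ℕ) (G : SimpleGraph V) : Prop :=
  k < ENat.card V ∧ ∀ S : Set V, S.encard < k → (G.induce Sᶜ).Connected

namespace IsVertexConnected

theorem of_preconnected (hcard : k < ENat.card V)
    (hG : ∀ S : Set V, S.encard < k → (G.induce Sᶜ).Preconnected) : IsVertexConnected k G := by
  refine ⟨hcard, fun S hS ↦ (connected_iff _).2 ⟨hG S hS, ?_⟩⟩
  rw [Set.nonempty_coe_sort, Set.nonempty_compl]
  rintro rfl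
  exact (hS.trans hcard).ne (Set.encard_univ V)

theorem of_iso (e : G ≃g H) (hG : IsVertexConnected k G) : IsVertexConnected k H := by
  refine ⟨ENat.card_congr e.toEquiv ▸ hG.1, fun S hS ↦ ?_⟩
  have hbij : Set.BijOn e (e ⁻¹' S)ᶜ Sᶜ := e.bijective.bijOn_preimage (t := Sᶜ)
  refine (e.induce hbij).connected_iff.1 (hG.2 _ ?_)
  rwa [Set.encard_preimage_of_bijective e.bijective]

theorem connected_induce_compl_of_ncard_lt [Finite V] (hG : IsVertexConnected k G) {S : Set V}
    (hS : S.ncard < k) : (G.induce Sᶜ).Connected :=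
  hG.2 S (by rwa [← S.toFinite.cast_ncard_eq, Nat.cast_lt])

theorem connected_induce_compl_of_subsingleton (hG : IsVertexConnected 2 G) {S : Set V}
    (hS : S.Subsingleton) : (G.induce Sᶜ).Connected :=
  hG.2 S ((Set.encard_le_one_iff_subsingleton.2 hS).trans_lt (by norm_num))

end IsVertexConnected

end VertexConnected

section Cycle

/-- The path `s + 1, s + 2, …, s + (n + 1)` left after deleting `s` from the cycle on `Fin (n + 2)`,
parametrized so that connectivity can be pushed forward along it. -/
def pathGraphHomCycleGraphInduceCompl {n : ℕ} (s : Fin (n + 2)) :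
    pathGraph (n + 1) →g (cycleGraph (n + 2)).induce {s}ᶜ where
  toFun i := ⟨s + i.succ, by simp⟩
  map_rel' {i j} hij := by
    have hsucc : (pathGraph (n + 2)).Adj i.succ j.succ := by simpa [pathGraph_adj] using hij
    simpa [cycleGraph_adj] using pathGraph_le_cycleGraph hsucc

theorem surjective_pathGraphHomCycleGraphInduceCompl {n : ℕ} (s : Fin (n + 2)) :
    Function.Surjective (pathGraphHomCycleGraphInduceCompl s) := by
  rintro ⟨v, hv⟩
  obtain ⟨i, hi⟩ := Fin.exists_succ_eq.2 (sub_ne_zero.2 hv)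
  exact ⟨i, Subtype.ext (by simp [pathGraphHomCycleGraphInduceCompl, hi])⟩

theorem isVertexConnected_two_cycleGraph {n : ℕ} (hn : 3 ≤ n) :
    IsVertexConnected 2 (cycleGraph n) := by
  obtain ⟨m, rfl⟩ := Nat.exists_eq_add_of_le' hn
  have hcard : 2 < ENat.card (Fin (m + 3)) := by
    rw [ENat.card_eq_coe_fintype_card, Fintype.card_fin]
    norm_cast
  refine .of_preconnected hcard fun S hS ↦ ?_
  obtain rfl | ⟨s, rfl⟩ := Set.encard_le_one_iff_eq.1 (Order.le_of_lt_add_one hS)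
  · rw [Set.compl_empty]
    exact ((induceUnivIso _).connected_iff.2 cycleGraph_connected).preconnected
  · exact ((pathGraph_connected _).map _
      (surjective_pathGraphHomCycleGraphInduceCompl s)).preconnected

end Cycle

section BoxProd

variable {V W : Type*} {G : SimpleGraph V} {H : SimpleGraph W} {S : Set (V × W)}

theorem reachable_boxProd_induce_compl_of_snd_eq {a b : V} {w : W} (ha : (a, w) ∈ Sᶜ)
    (hb : (b, w) ∈ Sᶜ) :
    (((⊤ : SimpleGraph V) □ H).induce Sᶜ).Reachable ⟨(a, w), ha⟩ ⟨(b, w), hb⟩ := by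
  obtain rfl | hab := eq_or_ne a b
  · exact .rfl
  · exact Adj.reachable (boxProd_adj_left.2 hab)

theorem reachable_boxProd_induce_compl_of_fst_eq {a : V} {v w : W}
    (hH : (H.induce (Prod.mk a ⁻¹' S)ᶜ).Preconnected) (hv : (a, v) ∈ Sᶜ) (hw : (a, w) ∈ Sᶜ) :
    ((G □ H).induce Sᶜ).Reachable ⟨(a, v), hv⟩ ⟨(a, w), hw⟩ := by
  have hmaps : Set.MapsTo (G.boxProdRight H a) (Prod.mk a ⁻¹' S)ᶜ Sᶜ := fun _ h ↦ h
  exact (hH ⟨v, hv⟩ ⟨w, hw⟩).map (induceHom (G.boxProdRight H a).toHom hmaps)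

theorem preconnected_top_boxProd_induce_compl [Finite V] (hH : IsVertexConnected 2 H)
    (hS : S.encard ≤ ENat.card V) : (((⊤ : SimpleGraph V) □ H).induce Sᶜ).Preconnected := by
  rintro ⟨⟨a, v⟩, hv⟩ ⟨⟨b, w⟩, hw⟩
  have hcolumn_conn {c : V} (hc : (Prod.mk c ⁻¹' S).Subsingleton) :=
    (hH.connected_induce_compl_of_subsingleton hc).preconnected
  by_cases hcolumn : ∃ c, ∀ x, (c, x) ∈ Sᶜ
  · obtain ⟨c, hc⟩ := hcolumn
    have hfiber : (Prod.mk c ⁻¹' S).Subsingleton := fun x hx ↦ (hc x hx).elim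
    exact (reachable_boxProd_induce_compl_of_snd_eq hv (hc v)).trans <|
      (reachable_boxProd_induce_compl_of_fst_eq (hcolumn_conn hfiber) (hc v) (hc w)).trans <|
      reachable_boxProd_induce_compl_of_snd_eq (hc w) hw
  · simp only [Set.mem_compl_iff, not_exists, not_forall, not_not] at hcolumn
    choose f hf using hcolumn
    have hinj : Set.InjOn Prod.fst S :=
      injOn_of_surjOn_univ_of_encard_le (fun c _ ↦ ⟨(c, f c), hf c, rfl⟩) hS
    have hunique {c x} (hx : (c, x) ∈ S) : x = f c := congrArg Prod.snd (hinj hx (hf c) rfl)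
    have hfiber (c : V) : (Prod.mk c ⁻¹' S).Subsingleton := fun x hx y hy ↦
      (hunique hx).trans (hunique hy).symm
    obtain ⟨r, hra, hrb⟩ : ∃ r, r ≠ f a ∧ r ≠ f b :=
      ENat.exists_ne_ne_of_three_le (Order.add_one_le_of_lt hH.1) _ _
    have hra' : (a, r) ∈ Sᶜ := fun h ↦ hra (hunique h)
    have hrb' : (b, r) ∈ Sᶜ := fun h ↦ hrb (hunique h)
    exact (reachable_boxProd_induce_compl_of_fst_eq (hcolumn_conn (hfiber a)) hv hra').trans <|
      (reachable_boxProd_induce_compl_of_snd_eq hra' hrb').trans <|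
      reachable_boxProd_induce_compl_of_fst_eq (hcolumn_conn (hfiber b)) hrb' hw

theorem isVertexConnected_top_boxProd [Finite V] [Nonempty V] (hH : IsVertexConnected 2 H) :
    IsVertexConnected (Nat.card V + 1) ((⊤ : SimpleGraph V) □ H) := by
  refine .of_preconnected ?_ fun S hS ↦ preconnected_top_boxProd_induce_compl hH ?_
  · have hV : 0 < Nat.card V := Nat.card_pos
    have hW : 3 ≤ ENat.card W := Order.add_one_le_of_lt hH.1
    calc ((Nat.card V + 1 : ℕ) : ℕ∞)
      _ < (Nat.card V * 3 : ℕ) := by norm_cast; omega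
      _ = ENat.card V * 3 := by simp [ENat.card_eq_coe_natCard]
      _ ≤ ENat.card V * ENat.card W := by gcongr
      _ = ENat.card (V × W) := (ENat.card_prod V W).symm
  · rw [ENat.card_eq_coe_natCard]
    exact Order.le_of_lt_add_one (by exact_mod_cast hS)

end BoxProd

section Regular

variable {V W : Type*} {G : SimpleGraph V} {H : SimpleGraph W}

theorem isRegularOfDegree_boxProd [G.LocallyFinite] [H.LocallyFinite] [(G □ H).LocallyFinite]
    {d e : ℕ} (hG : G.IsRegularOfDegree d) (hH : H.IsRegularOfDegree e) :
    (G □ H).IsRegularOfDegree (d + e) := fun x ↦ by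
  rw [degree_boxProd, hG.degree_eq, hH.degree_eq]

theorem isRegularOfDegree_two_cycleGraph {n : ℕ} (hn : 3 ≤ n) :
    (cycleGraph n).IsRegularOfDegree 2 := by
  obtain ⟨m, rfl⟩ := Nat.exists_eq_add_of_le' hn
  exact fun _ ↦ cycleGraph_degree_three_le

theorem two_mul_ncard_edgeSet_of_isRegularOfDegree [Fintype V] [G.LocallyFinite] {d : ℕ}
    (hG : G.IsRegularOfDegree d) : 2 * G.edgeSet.ncard = d * Fintype.card V := by
  classical
  rw [← coe_edgeFinset, Set.ncard_coe_finset, ← sum_degrees_eq_twice_card_edges,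
    Finset.sum_const_nat fun v _ ↦ by convert hG v, Finset.card_univ, mul_comm]

theorem two_mul_ncard_edgeSet_top_boxProd_cycleGraph [Fintype V] [Nonempty V] {n : ℕ}
    (hn : 3 ≤ n) :
    2 * ((⊤ : SimpleGraph V) □ cycleGraph n).edgeSet.ncard =
      (Fintype.card V + 1) * (Fintype.card V * n) := by
  classical
  have hreg : ((⊤ : SimpleGraph V) □ cycleGraph n).IsRegularOfDegree (Fintype.card V - 1 + 2) :=
    isRegularOfDegree_boxProd .top (isRegularOfDegree_two_cycleGraph hn)
  have hdegree : Fintype.card V - 1 + 2 = Fintype.card V + 1 := by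
    have := Fintype.card_pos (α := V)
    omega
  rw [two_mul_ncard_edgeSet_of_isRegularOfDegree hreg, hdegree, Fintype.card_prod,
    Fintype.card_fin]

end Regular

theorem stmt_5_general (k n : ℕ) (hk : 2 ≤ k) (hdvd : (k - 1) ∣ n) (hn : 3 * (k - 1) ≤ n) :
    ∃ G : SimpleGraph (Fin n),
      (k < n ∧ ∀ S : Set (Fin n), S.ncard ≤ k - 1 → (G.induce Sᶜ).Connected) ∧
      G.edgeSet.ncard = k * n / 2 := by
  obtain ⟨a, rfl⟩ : ∃ a, k = a + 1 := ⟨k - 1, by omega⟩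
  obtain ⟨m, rfl⟩ := hdvd
  rw [Nat.add_sub_cancel] at *
  have : NeZero a := ⟨by omega⟩
  have hm : 3 ≤ m := Nat.le_of_mul_le_mul_left (mul_comm 3 a ▸ hn) (by omega)
  let P := (⊤ : SimpleGraph (Fin a)) □ cycleGraph m
  have hconn : IsVertexConnected (a + 1) P := by
    simpa using isVertexConnected_top_boxProd (V := Fin a) (isVertexConnected_two_cycleGraph hm)
  have hedges : 2 * P.edgeSet.ncard = (a + 1) * (a * m) := by
    simpa using two_mul_ncard_edgeSet_top_boxProd_cycleGraph (V := Fin a) hm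
  have hcard : Fintype.card (Fin a × Fin m) = a * m := by simp
  let e : P ≃g P.overFin hcard := P.overFinIso hcard
  have hedges_eq : P.edgeSet.ncard = (P.overFin hcard).edgeSet.ncard :=
    Nat.card_congr e.mapEdgeSet
  refine ⟨P.overFin hcard, ⟨by omega, fun S hS ↦
    (hconn.of_iso e).connected_induce_compl_of_ncard_lt (Nat.lt_succ_of_le hS)⟩, ?_⟩
  omega

/-- For every integer `k ≥ 3` and every integer `n` divisible by `k - 1`
with `n ≥ 5(k-1)`, there exists a `k`-vertex-connected simple graph on `n` vertices
(formalized on the vertex set `Fin n`: `n > k` and deleting any set of at most `k - 1`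
vertices leaves a connected graph) with exactly `k * n / 2` edges. -/
theorem stmt_5 (k n : ℕ) (hk : 3 ≤ k) (hdvd : (k - 1) ∣ n) (hn : 5 * (k - 1) ≤ n) :
    ∃ G : SimpleGraph (Fin n),
      (k < n ∧ ∀ S : Set (Fin n), S.ncard ≤ k - 1 → (G.induce Sᶜ).Connected) ∧
      G.edgeSet.ncard = k * n / 2 :=
  stmt_5_general k n (by omega) hdvd (by omega)
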